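/- arXiv:0805.4482 — 2 statements merged into one kernel-verified Lean document; each statement's English description precedes it below -/
import Mathlib

section
/- Let n ≥ 1, let ν be the Haar probability measure on the orthogonal group O(n) of n×n real orthogonal matrices, let x = (x₁,…,x_n) ∈ ℝⁿ, and let y = (y₁,…,y_n) ∈ ℝⁿ have pairwise distinct entries. For 1 ≤ i, j ≤ n define M_{i,j}(x, y) = ∫_{O(n)} (O_{ij})² · exp(tr(X O Y Oᵀ)) dν(O), where X = diag(x₁,…,x_n) and Y = diag(y₁,…,y_n). Then for each i, j, the function y_j ↦ M_{i,j}(x,y) is differentiable and ∂M_{i,j}/∂y_j + (1/2) Σ_{l≠j} (M_{i,l} − M_{i,j})/(y_l − y_j) = x_i · M_{i,j}. -/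
open MeasureTheory Matrix Finset Function

noncomputable instance {n : ℕ} : MeasurableSpace (Matrix (Fin n) (Fin n) ℝ) :=
  inferInstanceAs (MeasurableSpace (Fin n → Fin n → ℝ))

/-- The quadratic moment `M_{i,j}(x,y) = ∫_{O(n)} (O_{ij})² e^{tr(X O Y Oᵀ)} dν(O)`
where `X = diag x` and `Y = diag y`. -/
noncomputable def Mmom (n : ℕ) (ν : Measure (Matrix.orthogonalGroup (Fin n) ℝ))
    (x y : Fin n → ℝ) (i j : Fin n) : ℝ :=
  ∫ O : Matrix.orthogonalGroup (Fin n) ℝ,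
    ((O : Matrix (Fin n) (Fin n) ℝ) i j) ^ 2 *
      Real.exp (Matrix.trace (Matrix.diagonal x * (O : Matrix (Fin n) (Fin n) ℝ) *
        Matrix.diagonal y * (O : Matrix (Fin n) (Fin n) ℝ)ᵀ)) ∂ν

namespace DunklAux

abbrev OG (n : ℕ) := Matrix.orthogonalGroup (Fin n) ℝ

instance matBorel {n : ℕ} : BorelSpace (Matrix (Fin n) (Fin n) ℝ) :=
  inferInstanceAs (BorelSpace (Fin n → Fin n → ℝ))

instance matSecond {n : ℕ} : SecondCountableTopology (Matrix (Fin n) (Fin n) ℝ) :=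
  inferInstanceAs (SecondCountableTopology (Fin n → Fin n → ℝ))

instance ogBorel {n : ℕ} : BorelSpace (Matrix.orthogonalGroup (Fin n) ℝ) :=
  inferInstanceAs (BorelSpace {A : Matrix (Fin n) (Fin n) ℝ // A ∈ Matrix.orthogonalGroup (Fin n) ℝ})

instance ogCompact {n : ℕ} : CompactSpace (Matrix.orthogonalGroup (Fin n) ℝ) := by
  have hK : IsCompact (Set.univ.pi fun _ : Fin n => Set.univ.pi fun _ : Fin n =>
      Set.Icc (-1 : ℝ) 1) :=
    isCompact_univ_pi fun _ => isCompact_univ_pi fun _ => isCompact_Icc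
  have hc : IsClosed ((Matrix.orthogonalGroup (Fin n) ℝ : Set (Matrix (Fin n) (Fin n) ℝ))) := by
    have : ((Matrix.orthogonalGroup (Fin n) ℝ : Set (Matrix (Fin n) (Fin n) ℝ))) =
        {A | A * star A = 1} := by
      ext A
      exact Matrix.mem_orthogonalGroup_iff (Fin n) ℝ
    rw [this]
    exact isClosed_eq (by fun_prop) continuous_const
  have : IsCompact ((Matrix.orthogonalGroup (Fin n) ℝ : Set (Matrix (Fin n) (Fin n) ℝ))) := by
    refine IsCompact.of_isClosed_subset hK hc ?_
    intro A hA a _ b _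
    have := entry_norm_bound_of_unitary hA a b
    exact abs_le.mp this
  exact isCompact_iff_compactSpace.mp this

theorem integral_right {n : ℕ} (ν : Measure (Matrix.orthogonalGroup (Fin n) ℝ))
    [ν.IsHaarMeasure] [IsProbabilityMeasure ν] (g : Matrix.orthogonalGroup (Fin n) ℝ)
    (f : Matrix.orthogonalGroup (Fin n) ℝ → ℝ) : ∫ O, f (O * g) ∂ν = ∫ O, f O ∂ν := by
  have : ν.IsMulRightInvariant := by
    refine ⟨fun g => ?_⟩
    have hp : IsProbabilityMeasure (ν.map (· * g)) :=
      Measure.isProbabilityMeasure_map (continuous_mul_const g).measurable.aemeasurable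
    have hh : (ν.map (· * g)).IsHaarMeasure := inferInstance
    exact Measure.isHaarMeasure_eq_of_isProbabilityMeasure _ _
  exact integral_mul_right_eq_self f g

/-- differentiation under the integral over a compact group -/
theorem deriv_int {G : Type*} [TopologicalSpace G] [CompactSpace G] [MeasurableSpace G]
    [BorelSpace G] (ν : Measure G) [IsFiniteMeasure ν] (F F' : ℝ → G → ℝ)
    (hF : ∀ t, Continuous (F t)) (hF' : Continuous fun p : ℝ × G => F' p.1 p.2)
    (h : ∀ t O, HasDerivAt (fun s => F s O) (F' t O) t) (t₀ : ℝ) :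
    HasDerivAt (fun t => ∫ O, F t O ∂ν) (∫ O, F' t₀ O ∂ν) t₀ := by
  have hK : IsCompact (Metric.closedBall t₀ 1 ×ˢ (Set.univ : Set G)) :=
    (isCompact_closedBall _ _).prod isCompact_univ
  obtain ⟨C, hC⟩ := hK.exists_bound_of_continuousOn hF'.continuousOn
  have hint : ∀ f : G → ℝ, Continuous f → Integrable f ν := fun f hf => by
    exact hf.integrable_of_hasCompactSupport (HasCompactSupport.of_compactSpace f)
  refine (hasDerivAt_integral_of_dominated_loc_of_deriv_le (bound := fun _ => C)
    (Metric.closedBall_mem_nhds t₀ one_pos) ?_ (hint _ (hF t₀)) (F' := F') ?_ ?_ ?_ ?_).2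
  · exact Filter.Eventually.of_forall fun t => (hint _ (hF t)).aestronglyMeasurable
  · exact (hint _ (by fun_prop)).aestronglyMeasurable
  · exact Filter.Eventually.of_forall fun O t ht => hC (t, O) ⟨ht, trivial⟩
  · exact integrable_const _
  · exact Filter.Eventually.of_forall fun O t _ => h t O

theorem trace_eq {n : ℕ} (x y : Fin n → ℝ) (O : Matrix (Fin n) (Fin n) ℝ) :
    Matrix.trace (Matrix.diagonal x * O * Matrix.diagonal y * Oᵀ) =
      ∑ a, ∑ b, x a * O a b ^ 2 * y b := by
  simp only [Matrix.trace, Matrix.diag, Matrix.mul_apply (N := Oᵀ), Matrix.mul_diagonal,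
    Matrix.diagonal_mul, Matrix.transpose_apply]
  refine Finset.sum_congr rfl fun a _ => Finset.sum_congr rfl fun b _ => ?_
  ring

noncomputable def W {n : ℕ} (x y : Fin n → ℝ) (O : Matrix (Fin n) (Fin n) ℝ) : ℝ :=
  ∑ a, ∑ b, x a * O a b ^ 2 * y b

noncomputable def U {n : ℕ} (j l : Fin n) (O : Matrix (Fin n) (Fin n) ℝ) : Matrix (Fin n) (Fin n) ℝ :=
  Matrix.of fun a b => if b = j then O a j else if b = l then O a l else 0

noncomputable def V {n : ℕ} (j l : Fin n) (O : Matrix (Fin n) (Fin n) ℝ) : Matrix (Fin n) (Fin n) ℝ :=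
  Matrix.of fun a b => if b = j then O a l else if b = l then - O a j else 0

noncomputable def Rm {n : ℕ} (j l : Fin n) (t : ℝ) (O : Matrix (Fin n) (Fin n) ℝ) : Matrix (Fin n) (Fin n) ℝ :=
  O + (Real.cos t - 1) • U j l O + Real.sin t • V j l O

theorem Rm_mul {n : ℕ} (j l : Fin n) (t : ℝ) (O : Matrix (Fin n) (Fin n) ℝ) :
    Rm j l t O = O * Rm j l t 1 := by
  have hU : U j l O = O * U j l 1 := by
    ext a b
    simp only [U, Matrix.mul_apply, Matrix.of_apply, Matrix.one_apply]
    split_ifs <;> simp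
  have hV : V j l O = O * V j l 1 := by
    ext a b
    simp only [V, Matrix.mul_apply, Matrix.of_apply, Matrix.one_apply]
    split_ifs <;> simp
  simp only [Rm, mul_add, hU, hV, mul_one, Matrix.mul_smul]

theorem Rm_orth {n : ℕ} (j l : Fin n) (hjl : l ≠ j) (t : ℝ) :
    Rm j l t 1 ∈ Matrix.orthogonalGroup (Fin n) ℝ := by
  rw [Matrix.mem_orthogonalGroup_iff]
  have hst : (Rm j l t 1)ᵀ = Rm j l (-t) 1 := by
    ext a b
    simp only [Rm, U, V, Matrix.transpose_apply, Matrix.add_apply, Matrix.smul_apply, Matrix.of_apply,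
      Matrix.one_apply, Real.cos_neg, Real.sin_neg, smul_eq_mul]
    split_ifs <;> simp_all
  rw [hst, ← Rm_mul]
  have hc := Real.sin_sq_add_cos_sq t
  ext a b
  simp only [Rm, U, V, Matrix.add_apply, Matrix.smul_apply, Matrix.of_apply,
      Matrix.one_apply, Real.cos_neg, Real.sin_neg, smul_eq_mul]
  by_cases h1 : b = j
  · subst h1
    by_cases h2 : a = b
    · subst h2; simp [hjl, hjl.symm]; linarith
    · by_cases h3 : a = l
      · subst h3; simp [hjl, hjl.symm]; ring
      · simp [h2, h3, hjl, hjl.symm]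
  · by_cases h1' : b = l
    · subst h1'
      by_cases h2 : a = b
      · subst h2; simp [hjl, hjl.symm]; linarith
      · by_cases h3 : a = j
        · subst h3; simp [hjl, hjl.symm]; ring
        · simp [h2, h3, hjl, hjl.symm]
    · simp [h1, h1']

theorem Rm_deriv {n : ℕ} (j l : Fin n) (t : ℝ) (O : Matrix (Fin n) (Fin n) ℝ) (a b : Fin n) :
    HasDerivAt (fun s => Rm j l s O a b)
      (-Real.sin t * U j l O a b + Real.cos t * V j l O a b) t := by
  simp only [Rm, Matrix.add_apply, Matrix.smul_apply, smul_eq_mul]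
  exact ((((Real.hasDerivAt_cos t).sub_const 1).mul_const _).const_add _).add
    ((Real.hasDerivAt_sin t).mul_const _)

noncomputable def D {n : ℕ} (j l : Fin n) (t : ℝ) (O : Matrix (Fin n) (Fin n) ℝ) (a b : Fin n) : ℝ :=
  -Real.sin t * U j l O a b + Real.cos t * V j l O a b

theorem U_cont {n : ℕ} (j l a b : Fin n) :
    Continuous fun O : Matrix (Fin n) (Fin n) ℝ => U j l O a b := by
  simp only [U, Matrix.of_apply]
  split_ifs <;> fun_prop

theorem V_cont {n : ℕ} (j l a b : Fin n) :
    Continuous fun O : Matrix (Fin n) (Fin n) ℝ => V j l O a b := by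
  simp only [V, Matrix.of_apply]
  split_ifs <;> fun_prop

theorem coe_cont {n : ℕ} : Continuous fun p : ℝ × Matrix.orthogonalGroup (Fin n) ℝ =>
    (p.2 : Matrix (Fin n) (Fin n) ℝ) := continuous_subtype_val.comp continuous_snd

theorem D_cont {n : ℕ} (j l a b : Fin n) :
    Continuous fun p : ℝ × Matrix.orthogonalGroup (Fin n) ℝ => D j l p.1 p.2 a b := by
  have h1 := (U_cont j l a b).comp (coe_cont (n := n))
  have h2 := (V_cont j l a b).comp (coe_cont (n := n))
  simp only [Function.comp_def] at h1 h2
  unfold D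
  fun_prop

theorem Rm_cont {n : ℕ} (j l a b : Fin n) :
    Continuous fun p : ℝ × Matrix.orthogonalGroup (Fin n) ℝ => Rm j l p.1 p.2 a b := by
  have h1 := (U_cont j l a b).comp (coe_cont (n := n))
  have h2 := (V_cont j l a b).comp (coe_cont (n := n))
  have h3 : Continuous fun p : ℝ × Matrix.orthogonalGroup (Fin n) ℝ =>
      (p.2 : Matrix (Fin n) (Fin n) ℝ) a b := coe_cont.matrix_elem a b
  simp only [Function.comp_def] at h1 h2
  simp only [Rm, Matrix.add_apply, Matrix.smul_apply, smul_eq_mul]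
  exact (h3.add (((Real.continuous_cos.comp continuous_fst).sub continuous_const).mul h1)).add
    ((Real.continuous_sin.comp continuous_fst).mul h2)

theorem int_of_cont {n : ℕ} (ν : Measure (Matrix.orthogonalGroup (Fin n) ℝ))
    [IsFiniteMeasure ν] (f : Matrix.orthogonalGroup (Fin n) ℝ → ℝ) (hf : Continuous f) :
    Integrable f ν :=
  hf.integrable_of_hasCompactSupport (HasCompactSupport.of_compactSpace f)

theorem el_cont {n : ℕ} (a b : Fin n) : Continuous fun O : Matrix.orthogonalGroup (Fin n) ℝ =>
    (O : Matrix (Fin n) (Fin n) ℝ) a b := continuous_subtype_val.matrix_elem a b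

theorem W_cont {n : ℕ} (x y : Fin n → ℝ) : Continuous fun O : Matrix.orthogonalGroup (Fin n) ℝ =>
    W x y (O : Matrix (Fin n) (Fin n) ℝ) := by
  have hel := @el_cont n
  unfold W
  obtain ⟨e, he⟩ : ∃ e : Fin n → Fin n → Matrix.orthogonalGroup (Fin n) ℝ → ℝ,
    ∀ a b (O : Matrix.orthogonalGroup (Fin n) ℝ), (O : Matrix (Fin n) (Fin n) ℝ) a b = e a b O := ⟨_, fun _ _ _ => rfl⟩
  simp only [he] at hel ⊢
  fun_prop

theorem key {n : ℕ} (ν : Measure (Matrix.orthogonalGroup (Fin n) ℝ))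
    [ν.IsHaarMeasure] [IsProbabilityMeasure ν] (x y : Fin n → ℝ) (i j l : Fin n) (hjl : l ≠ j) :
    Mmom n ν x y i l - Mmom n ν x y i j = 2 * (y l - y j) *
      ∫ O : Matrix.orthogonalGroup (Fin n) ℝ, (O : Matrix (Fin n) (Fin n) ℝ) i j *
        (O : Matrix (Fin n) (Fin n) ℝ) i l *
        (∑ a, x a * (O : Matrix (Fin n) (Fin n) ℝ) a j * (O : Matrix (Fin n) (Fin n) ℝ) a l) *
        Real.exp (W x y (O : Matrix (Fin n) (Fin n) ℝ)) ∂ν := by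
  let F : ℝ → Matrix.orthogonalGroup (Fin n) ℝ → ℝ := fun t O =>
    Rm j l t O i j * Rm j l t O i l * Real.exp (∑ a, ∑ b, x a * Rm j l t O a b ^ 2 * y b)
  let F' : ℝ → Matrix.orthogonalGroup (Fin n) ℝ → ℝ := fun t O =>
    (D j l t O i j * Rm j l t O i l + Rm j l t O i j * D j l t O i l) *
      Real.exp (∑ a, ∑ b, x a * Rm j l t O a b ^ 2 * y b) +
    Rm j l t O i j * Rm j l t O i l * (Real.exp (∑ a, ∑ b, x a * Rm j l t O a b ^ 2 * y b) *
      ∑ a, ∑ b, x a * (2 * Rm j l t O a b * D j l t O a b) * y b)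
  have hR := @Rm_cont n j l
  have hD := @D_cont n j l
  have hFc : Continuous fun p : ℝ × Matrix.orthogonalGroup (Fin n) ℝ => F p.1 p.2 := by
    simp only [F]; fun_prop
  have hF'c : Continuous fun p : ℝ × Matrix.orthogonalGroup (Fin n) ℝ => F' p.1 p.2 := by
    simp only [F']; fun_prop
  have hder : ∀ t O, HasDerivAt (fun s => F s O) (F' t O) t := by
    intro t O
    have h := fun a b => Rm_deriv j l t (O : Matrix (Fin n) (Fin n) ℝ) a b
    refine ((h i j).mul (h i l)).mul (HasDerivAt.exp ?_)
    refine HasDerivAt.fun_sum fun a _ => HasDerivAt.fun_sum fun b _ => ?_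
    have := (((h a b).pow 2).const_mul (x a)).mul_const (y b)
    simpa [D] using this
  have hmain := deriv_int ν F F' (fun t => hFc.comp (by fun_prop : Continuous fun O => (t, O)))
    hF'c hder 0
  have hconst : ∀ t, ∫ O, F t O ∂ν = ∫ O : Matrix.orthogonalGroup (Fin n) ℝ,
      (O : Matrix (Fin n) (Fin n) ℝ) i j * (O : Matrix (Fin n) (Fin n) ℝ) i l *
        Real.exp (W x y (O : Matrix (Fin n) (Fin n) ℝ)) ∂ν := by
    intro t
    rw [← integral_right ν ⟨Rm j l t 1, Rm_orth j l hjl t⟩ (fun O =>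
      (O : Matrix (Fin n) (Fin n) ℝ) i j * (O : Matrix (Fin n) (Fin n) ℝ) i l *
        Real.exp (W x y (O : Matrix (Fin n) (Fin n) ℝ)))]
    refine integral_congr_ae (Filter.Eventually.of_forall fun O => ?_)
    simp only [F, W, Submonoid.coe_mul]
    rw [← Rm_mul]
  have h0 : ∫ O, F' 0 O ∂ν = 0 := by
    simp only [hconst] at hmain
    exact hmain.unique (hasDerivAt_const _ _)
  have hF0 : ∀ O : Matrix.orthogonalGroup (Fin n) ℝ, F' 0 O =
      ((O : Matrix (Fin n) (Fin n) ℝ) i l ^ 2 * Real.exp (W x y (O : Matrix (Fin n) (Fin n) ℝ)) -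
      (O : Matrix (Fin n) (Fin n) ℝ) i j ^ 2 * Real.exp (W x y (O : Matrix (Fin n) (Fin n) ℝ))) -
      2 * (y l - y j) * ((O : Matrix (Fin n) (Fin n) ℝ) i j *
        (O : Matrix (Fin n) (Fin n) ℝ) i l *
        (∑ a, x a * (O : Matrix (Fin n) (Fin n) ℝ) a j * (O : Matrix (Fin n) (Fin n) ℝ) a l) *
        Real.exp (W x y (O : Matrix (Fin n) (Fin n) ℝ))) := by
    rintro ⟨O, hO⟩
    have hRO : Rm j l 0 O = O := by simp [Rm]
    have hs : ∑ a, ∑ b, x a * (2 * O a b * D j l 0 O a b) * y b =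
        2 * (y j - y l) * ∑ a, x a * O a j * O a l := by
      rw [Finset.mul_sum]
      refine Finset.sum_congr rfl fun a _ => ?_
      have : ∀ b, x a * (2 * O a b * D j l 0 O a b) * y b =
          (if b = j then 2 * x a * O a j * O a l * y j else 0) +
          (if b = l then -(2 * x a * O a j * O a l * y l) else 0) := by
        intro b
        simp only [D, V, Matrix.of_apply, Real.sin_zero, Real.cos_zero]
        by_cases h1 : b = j
        · subst h1; simp only [if_true, hjl.symm, if_false]; ring
        · by_cases h2 : b = l
          · subst h2; simp only [if_true, hjl, if_false]; ring
          · simp [h1, h2]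
      simp only [this, Finset.sum_add_distrib, Finset.sum_ite_eq', Finset.mem_univ, if_true]
      ring
    simp only [F', hRO, hs]
    have e1 : D j l 0 O i j = O i l := by simp [D, V]
    have e2 : D j l 0 O i l = - O i j := by simp [D, V, hjl]
    rw [e1, e2]
    simp only [W]
    ring
  have hel := @el_cont n
  have hW := W_cont x y
  simp only [hF0] at h0
  rw [integral_sub, integral_sub, integral_const_mul] at h0
  · simp only [Mmom, trace_eq]
    simp only [W] at h0 ⊢
    linarith
  all_goals
    refine int_of_cont ν _ ?_
    simp only [W]
    obtain ⟨e, he⟩ : ∃ e : Fin n → Fin n → Matrix.orthogonalGroup (Fin n) ℝ → ℝ,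
      ∀ a b (O : Matrix.orthogonalGroup (Fin n) ℝ), (O : Matrix (Fin n) (Fin n) ℝ) a b = e a b O := ⟨_, fun _ _ _ => rfl⟩
    simp only [he] at hel ⊢
    fun_prop

theorem deriv_M {n : ℕ} (ν : Measure (Matrix.orthogonalGroup (Fin n) ℝ))
    [ν.IsHaarMeasure] [IsProbabilityMeasure ν] (x y : Fin n → ℝ) (i j : Fin n) :
    HasDerivAt (fun t => Mmom n ν x (Function.update y j t) i j)
      (∫ O : Matrix.orthogonalGroup (Fin n) ℝ, (O : Matrix (Fin n) (Fin n) ℝ) i j ^ 2 *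
        (Real.exp (W x y (O : Matrix (Fin n) (Fin n) ℝ)) *
          ∑ a, x a * (O : Matrix (Fin n) (Fin n) ℝ) a j ^ 2) ∂ν) (y j) := by
  have hel : ∀ a b, Continuous fun p : ℝ × Matrix.orthogonalGroup (Fin n) ℝ =>
      (p.2 : Matrix (Fin n) (Fin n) ℝ) a b := fun a b => coe_cont.matrix_elem a b
  have hu : ∀ b, Continuous fun p : ℝ × Matrix.orthogonalGroup (Fin n) ℝ =>
      Function.update y j p.1 b := fun b => by
    simp only [Function.update_apply]
    split_ifs <;> fun_prop
  let F : ℝ → Matrix.orthogonalGroup (Fin n) ℝ → ℝ := fun t O =>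
    (O : Matrix (Fin n) (Fin n) ℝ) i j ^ 2 *
      Real.exp (∑ a, ∑ b, x a * (O : Matrix (Fin n) (Fin n) ℝ) a b ^ 2 * Function.update y j t b)
  let F' : ℝ → Matrix.orthogonalGroup (Fin n) ℝ → ℝ := fun t O =>
    (O : Matrix (Fin n) (Fin n) ℝ) i j ^ 2 *
      (Real.exp (∑ a, ∑ b, x a * (O : Matrix (Fin n) (Fin n) ℝ) a b ^ 2 * Function.update y j t b) *
        ∑ a, x a * (O : Matrix (Fin n) (Fin n) ℝ) a j ^ 2)
  have hFc : Continuous fun p : ℝ × Matrix.orthogonalGroup (Fin n) ℝ => F p.1 p.2 := by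
    simp only [F]
    clear F'
    obtain ⟨e, he⟩ : ∃ e : Fin n → Fin n → Matrix.orthogonalGroup (Fin n) ℝ → ℝ,
      ∀ a b (O : Matrix.orthogonalGroup (Fin n) ℝ), (O : Matrix (Fin n) (Fin n) ℝ) a b = e a b O := ⟨_, fun _ _ _ => rfl⟩
    have hel2 : ∀ a b, Continuous (e a b) := fun a b => by
      have h := el_cont (n := n) a b
      simp only [he] at h
      exact h
    obtain ⟨u, hu2⟩ : ∃ u : Fin n → ℝ → ℝ, ∀ b t, Function.update y j t b = u b t :=
      ⟨_, fun _ _ => rfl⟩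
    simp only [hu2] at hu ⊢
    simp only [he]
    have hel3 : ∀ a b, Continuous fun p : ℝ × Matrix.orthogonalGroup (Fin n) ℝ => e a b p.2 :=
      fun a b => (hel2 a b).comp continuous_snd
    have hu3 : ∀ b, Continuous (u b) := fun b => (hu b).comp
      (by fun_prop : Continuous fun t : ℝ => (t, (1 : Matrix.orthogonalGroup (Fin n) ℝ)))
    clear hu
    fun_prop
  have hF'c : Continuous fun p : ℝ × Matrix.orthogonalGroup (Fin n) ℝ => F' p.1 p.2 := by
    simp only [F']
    obtain ⟨e, he⟩ : ∃ e : Fin n → Fin n → Matrix.orthogonalGroup (Fin n) ℝ → ℝ,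
      ∀ a b (O : Matrix.orthogonalGroup (Fin n) ℝ), (O : Matrix (Fin n) (Fin n) ℝ) a b = e a b O := ⟨_, fun _ _ _ => rfl⟩
    have hel2 : ∀ a b, Continuous (e a b) := fun a b => by
      have h := el_cont (n := n) a b
      simp only [he] at h
      exact h
    obtain ⟨u, hu2⟩ : ∃ u : Fin n → ℝ → ℝ, ∀ b t, Function.update y j t b = u b t :=
      ⟨_, fun _ _ => rfl⟩
    simp only [hu2] at hu ⊢
    simp only [he]
    have hel3 : ∀ a b, Continuous fun p : ℝ × Matrix.orthogonalGroup (Fin n) ℝ => e a b p.2 :=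
      fun a b => (hel2 a b).comp continuous_snd
    have hu3 : ∀ b, Continuous (u b) := fun b => (hu b).comp
      (by fun_prop : Continuous fun t : ℝ => (t, (1 : Matrix.orthogonalGroup (Fin n) ℝ)))
    clear hu
    fun_prop
  have hder : ∀ t O, HasDerivAt (fun s => F s O) (F' t O) t := by
    intro t O
    refine HasDerivAt.const_mul _ (HasDerivAt.exp ?_)
    refine HasDerivAt.fun_sum fun a _ => ?_
    have : x a * (O : Matrix (Fin n) (Fin n) ℝ) a j ^ 2 =
        ∑ b, x a * (O : Matrix (Fin n) (Fin n) ℝ) a b ^ 2 * (if b = j then 1 else 0) := by simp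
    rw [this]
    refine HasDerivAt.fun_sum fun b _ => HasDerivAt.const_mul _ ?_
    simp only [Function.update_apply]
    split_ifs
    · exact hasDerivAt_id t
    · exact hasDerivAt_const _ _
  have hmain := deriv_int ν F F' (fun t => hFc.comp (by fun_prop : Continuous fun O => (t, O)))
    hF'c hder (y j)
  simp only [F, F', Function.update_eq_self] at hmain
  simpa only [Mmom, trace_eq, W] using hmain

end DunklAux

/-- Dunkl-type linear equation for the quadratic moments, `β = 1/2`:
for the Haar probability measure `ν` on `O(n)`, real `x` and `y` with the `y` entries
pairwise distinct, the function `y_j ↦ M_{i,j}` is differentiable and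
`∂M_{i,j}/∂y_j + (1/2) Σ_{l≠j} (M_{i,l} − M_{i,j})/(y_l − y_j) = x_i M_{i,j}`. -/
theorem statement13 (n : ℕ) (hn : 1 ≤ n) (ν : Measure (Matrix.orthogonalGroup (Fin n) ℝ))
    [ν.IsHaarMeasure] [IsProbabilityMeasure ν] (x y : Fin n → ℝ)
    (hy : ∀ i j : Fin n, i ≠ j → y i ≠ y j) (i j : Fin n) :
    HasDerivAt (fun t => Mmom n ν x (Function.update y j t) i j)
      (x i * Mmom n ν x y i j -
        (1 / 2) *
          ∑ l ∈ Finset.univ.erase j, (Mmom n ν x y i l - Mmom n ν x y i j) / (y l - y j))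
      (y j) := by
  have hd := DunklAux.deriv_M ν x y i j
  convert hd using 1
  have hel := @DunklAux.el_cont n
  have hW := DunklAux.W_cont x y
  have hsum : (1 / 2 : ℝ) * ∑ l ∈ Finset.univ.erase j,
      (Mmom n ν x y i l - Mmom n ν x y i j) / (y l - y j) =
      ∑ l ∈ Finset.univ.erase j, ∫ O : Matrix.orthogonalGroup (Fin n) ℝ,
        (O : Matrix (Fin n) (Fin n) ℝ) i j * (O : Matrix (Fin n) (Fin n) ℝ) i l *
        (∑ a, x a * (O : Matrix (Fin n) (Fin n) ℝ) a j * (O : Matrix (Fin n) (Fin n) ℝ) a l) *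
        Real.exp (DunklAux.W x y (O : Matrix (Fin n) (Fin n) ℝ)) ∂ν := by
    rw [Finset.mul_sum]
    refine Finset.sum_congr rfl fun l hl => ?_
    have hne := Finset.ne_of_mem_erase hl
    have h0 : y l - y j ≠ 0 := sub_ne_zero.mpr (hy l j hne)
    rw [DunklAux.key ν x y i j l hne]
    field_simp
  rw [hsum, ← integral_finsetSum]
  · simp only [Mmom, DunklAux.trace_eq]
    rw [← integral_const_mul, ← integral_sub]
    · refine integral_congr_ae (Filter.Eventually.of_forall ?_)
      rintro ⟨O, hO⟩
      have horth : ∀ a, ∑ l, O i l * O a l = if i = a then 1 else 0 := by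
        intro a
        have h := (Matrix.mem_orthogonalGroup_iff (Fin n) ℝ).mp hO
        have := congrFun (congrFun h i) a
        simpa [Matrix.mul_apply, Matrix.one_apply, Matrix.star_apply] using this
      have hall : ∑ l, O i j * O i l * (∑ a, x a * O a j * O a l) *
          Real.exp (DunklAux.W x y O) = x i * (O i j ^ 2 * Real.exp (DunklAux.W x y O)) := by
        calc _ = O i j * Real.exp (DunklAux.W x y O) *
              ∑ a, x a * O a j * ∑ l, O i l * O a l := by
              simp only [Finset.mul_sum, Finset.sum_mul]
              rw [Finset.sum_comm]
              refine Finset.sum_congr rfl fun a _ => Finset.sum_congr rfl fun l _ => ?_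
              ring
          _ = _ := by
              simp only [horth]
              simp
              ring
      have hsplit := Finset.add_sum_erase Finset.univ
        (fun l => O i j * O i l * (∑ a, x a * O a j * O a l) * Real.exp (DunklAux.W x y O))
        (Finset.mem_univ j)
      have hj : ∑ a, x a * O a j * O a j = ∑ a, x a * O a j ^ 2 :=
        Finset.sum_congr rfl fun a _ => by ring
      simp only [hj] at hsplit
      rw [hall] at hsplit
      simp only [DunklAux.W] at hsplit ⊢
      linear_combination -hsplit
    all_goals
      refine DunklAux.int_of_cont ν _ ?_
      try simp only [DunklAux.W]
      obtain ⟨e, he⟩ : ∃ e : Fin n → Fin n → Matrix.orthogonalGroup (Fin n) ℝ → ℝ,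
        ∀ a b (O : Matrix.orthogonalGroup (Fin n) ℝ), (O : Matrix (Fin n) (Fin n) ℝ) a b = e a b O := ⟨_, fun _ _ _ => rfl⟩
      simp only [he] at hel ⊢
      fun_prop
  · intro l _
    refine DunklAux.int_of_cont ν _ ?_
    simp only [DunklAux.W]
    obtain ⟨e, he⟩ : ∃ e : Fin n → Fin n → Matrix.orthogonalGroup (Fin n) ℝ → ℝ,
      ∀ a b (O : Matrix.orthogonalGroup (Fin n) ℝ), (O : Matrix (Fin n) (Fin n) ℝ) a b = e a b O := ⟨_, fun _ _ _ => rfl⟩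
    simp only [he] at hel ⊢
    fun_prop
end

section
/- Let n ≥ 1, let ν be the Haar probability measure on the orthogonal group O(n) of n×n real orthogonal matrices, and let y = (y₁,…,y_n) ∈ ℝⁿ. Define I(x) = ∫_{O(n)} exp(tr(X O Y Oᵀ)) dν(O) for x = (x₁,…,x_n) ∈ ℝⁿ, where X = diag(x₁,…,x_n) and Y = diag(y₁,…,y_n). Then I is smooth, and at every point x with pairwise distinct entries it satisfies the Calogero equation: Σ_{i=1}^{n} ∂²I/∂x_i² + (1/2) Σ_{i≠j} (1/(x_i−x_j)) (∂I/∂x_i − ∂I/∂x_j) = (Σ_{j=1}^{n} y_j²) · I(x). -/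
open MeasureTheory Matrix Finset Function

/-- The angular integral `I(x) = ∫_{O(n)} e^{tr(X O Y Oᵀ)} dν(O)` with
`X = diag x`, `Y = diag y`. -/
noncomputable def angInt (n : ℕ) (ν : Measure (Matrix.orthogonalGroup (Fin n) ℝ))
    (y : Fin n → ℝ) (x : Fin n → ℝ) : ℝ :=
  ∫ O : Matrix.orthogonalGroup (Fin n) ℝ,
    Real.exp (Matrix.trace (Matrix.diagonal x * (O : Matrix (Fin n) (Fin n) ℝ) *
      Matrix.diagonal y * (O : Matrix (Fin n) (Fin n) ℝ)ᵀ)) ∂ν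


section ParamIntegral

variable {K : Type*} [TopologicalSpace K] [CompactSpace K] [MeasurableSpace K]
  [OpensMeasurableSpace K] (μ : Measure K) [IsFiniteMeasure μ]

theorem aux_integrable {f : K → ℝ} (hf : Continuous f) : Integrable f μ :=
  hf.integrable_of_hasCompactSupport (HasCompactSupport.of_compactSpace f)

theorem aux_hasFDerivAt {H : Type*} [NormedAddCommGroup H] [NormedSpace ℝ H]
    [FiniteDimensional ℝ H] {F : H → K → ℝ} {F' : H → K → H →L[ℝ] ℝ}
    (hF : ∀ x, Continuous (F x)) (hF' : Continuous (fun p : H × K => F' p.1 p.2))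
    (hd : ∀ x k, HasFDerivAt (F · k) (F' x k) x) (x : H) :
    HasFDerivAt (fun x => ∫ k, F x k ∂μ) (∫ k, F' x k ∂μ) x := by
  have : ProperSpace H := FiniteDimensional.proper ℝ H
  obtain ⟨C, hC⟩ := ((isCompact_closedBall x 1).prod (isCompact_univ (X := K))).exists_bound_of_continuousOn
    hF'.continuousOn
  refine hasFDerivAt_integral_of_dominated_of_fderiv_le (bound := fun _ => C)
    (Metric.closedBall_mem_nhds x one_pos) ?_ ?_ ?_ ?_ ?_ ?_
  · exact Filter.Eventually.of_forall fun x => (hF x).aestronglyMeasurable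
  · exact aux_integrable μ (hF x)
  · have : Continuous (F' x) := hF'.comp (Continuous.prodMk_right x)
    exact this.aestronglyMeasurable
  · exact Filter.Eventually.of_forall fun k z hz => hC (z, k) ⟨hz, trivial⟩
  · exact integrable_const _
  · exact Filter.Eventually.of_forall fun k z _ => hd z k

theorem aux_hasDerivAt {F F' : ℝ → K → ℝ}
    (hF : ∀ x, Continuous (F x)) (hF' : Continuous (fun p : ℝ × K => F' p.1 p.2))
    (hd : ∀ x k, HasDerivAt (F · k) (F' x k) x) (x : ℝ) :
    HasDerivAt (fun x => ∫ k, F x k ∂μ) (∫ k, F' x k ∂μ) x := by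
  obtain ⟨C, hC⟩ := ((isCompact_closedBall x 1).prod (isCompact_univ (X := K))).exists_bound_of_continuousOn
    hF'.continuousOn
  refine (hasDerivAt_integral_of_dominated_loc_of_deriv_le (bound := fun _ => C)
    (Metric.closedBall_mem_nhds x one_pos) ?_ ?_ ?_ ?_ ?_ ?_).2
  · exact Filter.Eventually.of_forall fun x => (hF x).aestronglyMeasurable
  · exact aux_integrable μ (hF x)
  · have : Continuous (F' x) := hF'.comp (Continuous.prodMk_right x)
    exact this.aestronglyMeasurable
  · exact Filter.Eventually.of_forall fun k z hz => hC (z, k) ⟨hz, trivial⟩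
  · exact integrable_const _
  · exact Filter.Eventually.of_forall fun k z _ => hd z k

/-- Laplace-type integrals with polynomial-type weights. -/
noncomputable def auxL {n : ℕ} (m : K → Fin n → ℝ) (g : K → ℝ) (x : Fin n → ℝ) : ℝ :=
  ∫ k, Real.exp (∑ i, x i * m k i) * g k ∂μ

theorem auxL_hasFDerivAt {n : ℕ} {m : K → Fin n → ℝ} (hm : Continuous m) {g : K → ℝ}
    (hg : Continuous g) (x : Fin n → ℝ) :
    HasFDerivAt (auxL μ m g)
      (∑ i, auxL μ m (fun k => m k i * g k) x •
        (ContinuousLinearMap.proj i : (Fin n → ℝ) →L[ℝ] ℝ)) x := by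
  have hm' : ∀ i, Continuous fun k => m k i := fun i => (continuous_apply i).comp hm
  have key := aux_hasFDerivAt μ
    (F := fun (x : Fin n → ℝ) k => Real.exp (∑ i, x i * m k i) * g k)
    (F' := fun x k => ∑ i, (Real.exp (∑ i, x i * m k i) * (m k i * g k)) •
        (ContinuousLinearMap.proj i : (Fin n → ℝ) →L[ℝ] ℝ)) ?_ ?_ ?_ x
  · refine key.congr_fderiv ?_
    rw [integral_finsetSum]
    · refine Finset.sum_congr rfl fun i _ => ?_
      rw [integral_smul_const]
      rfl
    · intro i _
      refine Integrable.smul_const ?_ _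
      apply aux_integrable
      fun_prop
  · intro x
    fun_prop
  · fun_prop
  · intro x k
    have h1 : HasFDerivAt (fun x : Fin n → ℝ => ∑ i, x i * m k i)
        (∑ i, m k i • (ContinuousLinearMap.proj i : (Fin n → ℝ) →L[ℝ] ℝ)) x := by
      refine HasFDerivAt.fun_sum fun i _ => ?_
      exact (hasFDerivAt_apply i x).mul_const (m k i)
    refine ((h1.exp).mul_const (g k)).congr_fderiv ?_
    ext v
    simp [Finset.mul_sum]
    refine Finset.sum_congr rfl fun i _ => ?_
    ring

theorem auxL_contDiff {n : ℕ} {m : K → Fin n → ℝ} (hm : Continuous m) (N : ℕ) :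
    ∀ {g : K → ℝ}, Continuous g → ContDiff ℝ N (auxL μ m g) := by
  have hm' : ∀ i, Continuous fun k => m k i := fun i => (continuous_apply i).comp hm
  induction N with
  | zero =>
    intro g hg
    simp only [Nat.cast_zero, contDiff_zero]
    exact continuous_iff_continuousAt.2 fun x => (auxL_hasFDerivAt μ hm hg x).continuousAt
  | succ N ih =>
    intro g hg
    push_cast
    rw [contDiff_succ_iff_hasFDerivAt]
    refine ⟨_, ?_, auxL_hasFDerivAt μ hm hg⟩
    refine ContDiff.sum fun i _ => ?_
    exact (ih ((hm' i).mul hg)).smul contDiff_const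

theorem auxL_hasDerivAt {n : ℕ} {m : K → Fin n → ℝ} (hm : Continuous m) {g : K → ℝ}
    (hg : Continuous g) (x : Fin n → ℝ) (i : Fin n) (t : ℝ) :
    HasDerivAt (fun t => auxL μ m g (Function.update x i t))
      (auxL μ m (fun k => m k i * g k) (Function.update x i t)) t := by
  have := (auxL_hasFDerivAt μ hm hg (Function.update x i t)).comp_hasDerivAt t
    (hasDerivAt_update x i t)
  refine this.congr_deriv ?_
  simp [Pi.single_apply]

end ParamIntegral

section Orth
variable {n : ℕ}

instance auxBorelMat : BorelSpace (Matrix (Fin n) (Fin n) ℝ) :=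
  inferInstanceAs (BorelSpace (Fin n → Fin n → ℝ))

instance auxBorelO : BorelSpace (Matrix.orthogonalGroup (Fin n) ℝ) :=
  Subtype.borelSpace _

instance auxCompactO : CompactSpace (Matrix.orthogonalGroup (Fin n) ℝ) := by
  rw [← isCompact_univ_iff, Subtype.isCompact_iff, Set.image_univ, Subtype.range_coe]
  have hc : IsCompact (Set.univ.pi fun _ : Fin n => Set.univ.pi fun _ : Fin n => Set.Icc (-1:ℝ) 1) :=
    isCompact_univ_pi fun _ => isCompact_univ_pi fun _ => isCompact_Icc
  refine hc.of_isClosed_subset ?_ ?_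
  · have : {A : Matrix (Fin n) (Fin n) ℝ | A * Aᵀ = 1} =
      ((Matrix.orthogonalGroup (Fin n) ℝ : Submonoid (Matrix (Fin n) (Fin n) ℝ)) : Set _) := by
      ext A; exact (Matrix.mem_orthogonalGroup_iff (Fin n) ℝ).symm
    refine this ▸ isClosed_eq ?_ continuous_const
    exact continuous_id.matrix_mul continuous_id.matrix_transpose
  · intro A hA a _ b _
    have := entry_norm_bound_of_unitary (𝕜 := ℝ) hA a b
    rw [Real.norm_eq_abs, abs_le] at this
    exact this

/-- The matrix `O Y Oᵀ`. -/
def auxM (y : Fin n → ℝ) (O : Matrix.orthogonalGroup (Fin n) ℝ) (i j : Fin n) : ℝ :=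
  ∑ k, O.1 i k * y k * O.1 j k

theorem auxM_cont (y : Fin n → ℝ) (i j : Fin n) : Continuous fun O => auxM y O i j := by
  unfold auxM
  have : ∀ i k, Continuous fun O : Matrix.orthogonalGroup (Fin n) ℝ => O.1 i k := fun i k =>
    (continuous_subtype_val.matrix_elem i k)
  exact continuous_finsetSum _ fun k _ => ((this i k).mul continuous_const).mul (this j k)

theorem auxM_eq (y : Fin n → ℝ) (O : Matrix.orthogonalGroup (Fin n) ℝ) :
    (Matrix.of (auxM y O)) = O.1 * Matrix.diagonal y * O.1ᵀ := by
  ext i j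
  rw [Matrix.mul_apply]
  simp [auxM, Matrix.mul_diagonal]

theorem auxM_sq (y : Fin n → ℝ) (O : Matrix.orthogonalGroup (Fin n) ℝ) :
    ∑ i, ∑ j, auxM y O i j ^ 2 = ∑ k, y k ^ 2 := by
  have hO : O.1ᵀ * O.1 = 1 := (Matrix.mem_orthogonalGroup_iff' (Fin n) ℝ).1 O.2
  have h1 : ∑ i, ∑ j, auxM y O i j ^ 2 =
      Matrix.trace (Matrix.of (auxM y O) * (Matrix.of (auxM y O))ᵀ) := by
    simp [Matrix.trace, Matrix.mul_apply, sq]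
  rw [h1, auxM_eq]
  have h2 : O.1 * Matrix.diagonal y * O.1ᵀ * (O.1 * Matrix.diagonal y * O.1ᵀ)ᵀ
      = O.1 * (Matrix.diagonal y * Matrix.diagonal y) * O.1ᵀ := by
    simp only [Matrix.transpose_mul, Matrix.transpose_transpose, Matrix.diagonal_transpose]
    calc _ = O.1 * Matrix.diagonal y * (O.1ᵀ * O.1) * (Matrix.diagonal y * O.1ᵀ) := by
          simp only [Matrix.mul_assoc]
      _ = _ := by rw [hO]; simp only [Matrix.mul_assoc, Matrix.mul_one]
  rw [h2, Matrix.trace_mul_comm, ← Matrix.mul_assoc, hO]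
  simp [Matrix.trace, sq]

theorem angInt_eq (ν : Measure (Matrix.orthogonalGroup (Fin n) ℝ)) (y : Fin n → ℝ) :
    angInt n ν y = auxL ν (fun O i => auxM y O i i) (fun _ => 1) := by
  ext x
  unfold angInt auxL
  congr 1
  ext O
  rw [mul_one, Matrix.mul_assoc, Matrix.mul_assoc, ← Matrix.mul_assoc O.1, ← auxM_eq]
  simp [Matrix.trace]

/-- The rotation matrix. -/
noncomputable def auxR (i j : Fin n) (t : ℝ) : Matrix (Fin n) (Fin n) ℝ :=
  Matrix.of fun a b => if a = i then (if b = i then Real.cos t else if b = j then Real.sin t else 0)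
    else if a = j then (if b = i then -Real.sin t else if b = j then Real.cos t else 0)
    else if a = b then 1 else 0

theorem auxR_mul {i j : Fin n} (hij : i ≠ j) (t : ℝ) (A : Matrix (Fin n) (Fin n) ℝ) (a k : Fin n) :
    (auxR i j t * A) a k = if a = i then Real.cos t * A i k + Real.sin t * A j k
      else if a = j then -Real.sin t * A i k + Real.cos t * A j k else A a k := by
  have key : ∀ (c s : ℝ), ∑ x, (if x = i then c else if x = j then s else 0) * A x k
      = c * A i k + s * A j k := by
    intro c s
    have : ∀ x, (if x = i then c else if x = j then s else 0) * A x k =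
        (if x = i then c * A i k else 0) + (if x = j then s * A j k else 0) := by
      intro x
      split_ifs <;> simp_all
    simp [this, Finset.sum_add_distrib]
  simp only [auxR, Matrix.mul_apply, Matrix.of_apply]
  split_ifs with h1 h2
  · exact key _ _
  · exact key _ _
  · simp

theorem auxR_mem {i j : Fin n} (hij : i ≠ j) (t : ℝ) :
    auxR i j t ∈ Matrix.orthogonalGroup (Fin n) ℝ := by
  rw [Matrix.mem_orthogonalGroup_iff]
  ext a b
  rw [auxR_mul hij]
  simp only [auxR, Matrix.transpose_apply, Matrix.of_apply, Matrix.one_apply]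
  by_cases ha : a = i <;> by_cases hb : b = i <;> by_cases ha' : a = j <;> by_cases hb' : b = j <;>
    simp_all [eq_comm] <;> nlinarith [Real.sin_sq_add_cos_sq t]

theorem auxM_rot (y : Fin n → ℝ) {i j : Fin n} (hij : i ≠ j) (t : ℝ)
    (O : Matrix.orthogonalGroup (Fin n) ℝ) :
    let N := auxM y (⟨auxR i j t, auxR_mem hij t⟩ * O)
    let M := auxM y O
    N i i = Real.cos t ^ 2 * M i i + 2 * Real.cos t * Real.sin t * M i j + Real.sin t ^ 2 * M j j ∧
    N j j = Real.sin t ^ 2 * M i i - 2 * Real.cos t * Real.sin t * M i j + Real.cos t ^ 2 * M j j ∧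
    N i j = Real.cos t * Real.sin t * (M j j - M i i) + (Real.cos t ^ 2 - Real.sin t ^ 2) * M i j ∧
    ∀ a, a ≠ i → a ≠ j → N a a = M a a := by
  simp only [auxM, Submonoid.coe_mul, auxR_mul hij]
  simp only [if_true, if_neg hij.symm, Finset.mul_sum, ← Finset.sum_add_distrib,
    ← Finset.sum_sub_distrib]
  refine ⟨?_, ?_, ?_, ?_⟩
  · exact Finset.sum_congr rfl fun k _ => by ring
  · exact Finset.sum_congr rfl fun k _ => by ring
  · exact Finset.sum_congr rfl fun k _ => by ring
  · intro a h1 h2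
    simp [h1, h2]

theorem aux_sum_rot (x f g : Fin n → ℝ) {i j : Fin n} (hij : i ≠ j)
    (h : ∀ a, a ≠ i → a ≠ j → f a = g a) :
    ∑ a, x a * f a = ∑ a, x a * g a + x i * (f i - g i) + x j * (f j - g j) := by
  have : ∑ a, x a * (f a - g a) = x i * (f i - g i) + x j * (f j - g j) := by
    rw [← Finset.sum_pair (f := fun a => x a * (f a - g a)) hij]
    symm
    refine Finset.sum_subset (Finset.subset_univ _) fun a _ ha => ?_
    simp only [Finset.mem_insert, Finset.mem_singleton, not_or] at ha
    simp [h a ha.1 ha.2]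
  simp only [mul_sub, Finset.sum_sub_distrib] at this
  linarith

theorem aux_rel (ν : Measure (Matrix.orthogonalGroup (Fin n) ℝ))
    [ν.IsHaarMeasure] [IsProbabilityMeasure ν] (y x : Fin n → ℝ) {i j : Fin n} (hij : i ≠ j) :
    auxL ν (fun O a => auxM y O a a) (fun O => auxM y O i i) x -
      auxL ν (fun O a => auxM y O a a) (fun O => auxM y O j j) x =
    2 * (x i - x j) * auxL ν (fun O a => auxM y O a a) (fun O => auxM y O i j ^ 2) x := by
  have hM := auxM_cont y
  -- the entries after rotation
  let p : ℝ → Matrix.orthogonalGroup (Fin n) ℝ → ℝ := fun t O =>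
    Real.cos t * Real.sin t * (auxM y O j j - auxM y O i i)
      + (Real.cos t ^ 2 - Real.sin t ^ 2) * auxM y O i j
  let q : ℝ → Matrix.orthogonalGroup (Fin n) ℝ → ℝ := fun t O =>
    ∑ a, x a * auxM y O a a
      + x i * (Real.cos t ^ 2 * auxM y O i i + 2 * Real.cos t * Real.sin t * auxM y O i j
        + Real.sin t ^ 2 * auxM y O j j - auxM y O i i)
      + x j * (Real.sin t ^ 2 * auxM y O i i - 2 * Real.cos t * Real.sin t * auxM y O i j
        + Real.cos t ^ 2 * auxM y O j j - auxM y O j j)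
  let p' : ℝ → Matrix.orthogonalGroup (Fin n) ℝ → ℝ := fun t O =>
    (Real.cos t ^ 2 - Real.sin t ^ 2) * (auxM y O j j - auxM y O i i)
      - 4 * Real.cos t * Real.sin t * auxM y O i j
  let F' : ℝ → Matrix.orthogonalGroup (Fin n) ℝ → ℝ := fun t O =>
    Real.exp (q t O) * (2 * (x i - x j) * p t O) * p t O + Real.exp (q t O) * p' t O
  have hd : ∀ t O, HasDerivAt (fun t => Real.exp (q t O) * p t O) (F' t O) t := by
    intro t O
    have hc := Real.hasDerivAt_cos t
    have hs := Real.hasDerivAt_sin t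
    have hp : HasDerivAt (fun t => p t O) (p' t O) t := by
      refine HasDerivAt.congr_deriv (((hc.mul hs).mul_const _).add
        (((hc.pow 2).sub (hs.pow 2)).mul_const _)) ?_
      simp only [p']
      norm_num
      ring
    have hq : HasDerivAt (fun t => q t O) (2 * (x i - x j) * p t O) t := by
      refine HasDerivAt.congr_deriv ((((((((hc.pow 2).mul_const _).add
        (((hc.const_mul 2).mul hs).mul_const _)).add ((hs.pow 2).mul_const _)).sub_const _).const_mul
          _).const_add _).add ((((((hs.pow 2).mul_const _).sub
        (((hc.const_mul 2).mul hs).mul_const _)).add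
          ((hc.pow 2).mul_const _)).sub_const _).const_mul _)) ?_
      simp only [p]
      norm_num
      ring
    exact hq.exp.mul hp
  have hder := aux_hasDerivAt ν (F := fun t O => Real.exp (q t O) * p t O) (F' := F')
    (by intro t; fun_prop) (by fun_prop) hd 0
  have hconst : ∀ t, ∫ O, Real.exp (q t O) * p t O ∂ν =
      ∫ O, Real.exp (∑ a, x a * auxM y O a a) * auxM y O i j ∂ν := by
    intro t
    rw [← integral_mul_left_eq_self (μ := ν)
      (fun O => Real.exp (∑ a, x a * auxM y O a a) * auxM y O i j) ⟨auxR i j t, auxR_mem hij t⟩]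
    congr 1
    ext O
    obtain ⟨h1, h2, h3, h4⟩ := auxM_rot y hij t O
    rw [aux_sum_rot x _ _ hij h4, h1, h2, h3]
  simp only [hconst] at hder
  have h0 := hder.unique (hasDerivAt_const _ _)
  have hF0 : ∀ O, F' 0 O = 2 * (x i - x j) *
      (Real.exp (∑ a, x a * auxM y O a a) * auxM y O i j ^ 2) -
      (Real.exp (∑ a, x a * auxM y O a a) * auxM y O i i -
        Real.exp (∑ a, x a * auxM y O a a) * auxM y O j j) := by
    intro O
    simp only [F', p, q, p', Real.cos_zero, Real.sin_zero]
    ring_nf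
  simp only [hF0] at h0
  rw [integral_sub, integral_sub, integral_const_mul] at h0
  · unfold auxL
    linarith
  all_goals
    apply aux_integrable
    fun_prop

end Orth

/-- Calogero equation for the angular integral, `β = 1/2`: for the Haar
probability measure `ν` on `O(n)`, the angular integral `I` is smooth, and at every `x`
with pairwise distinct entries,
`Σᵢ ∂²I/∂xᵢ² + (1/2) Σ_{i≠j} (∂I/∂xᵢ − ∂I/∂xⱼ)/(xᵢ−xⱼ) = (Σⱼ yⱼ²) I(x)`. -/
theorem statement15 (n : ℕ) (hn : 1 ≤ n) (ν : Measure (Matrix.orthogonalGroup (Fin n) ℝ))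
    [ν.IsHaarMeasure] [IsProbabilityMeasure ν] (y : Fin n → ℝ) :
    ContDiff ℝ (⊤ : ℕ∞) (angInt n ν y) ∧
    ∀ x : Fin n → ℝ, (∀ i j : Fin n, i ≠ j → x i ≠ x j) →
      (∑ i : Fin n, iteratedDeriv 2 (fun t => angInt n ν y (Function.update x i t)) (x i)) +
        (1 / 2) * (∑ i : Fin n, ∑ j ∈ Finset.univ.erase i,
          (1 / (x i - x j)) *
            (deriv (fun t => angInt n ν y (Function.update x i t)) (x i) -
              deriv (fun t => angInt n ν y (Function.update x j t)) (x j))) =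
      (∑ j : Fin n, (y j) ^ 2) * angInt n ν y x := by
  have hM := auxM_cont y
  have hm : Continuous (fun (O : Matrix.orthogonalGroup (Fin n) ℝ) (a : Fin n) => auxM y O a a) := by
    fun_prop
  rw [angInt_eq]
  refine ⟨contDiff_infty.2 fun N => auxL_contDiff ν hm N continuous_const, ?_⟩
  intro x hx
  have d1 : ∀ i, deriv (fun t => auxL ν (fun O a => auxM y O a a) (fun _ => 1)
      (Function.update x i t)) = fun t => auxL ν (fun O a => auxM y O a a)
        (fun O => auxM y O i i * 1) (Function.update x i t) := fun i =>
    funext fun t => (auxL_hasDerivAt ν hm continuous_const x i t).deriv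
  have d2 : ∀ i, iteratedDeriv 2 (fun t => auxL ν (fun O a => auxM y O a a) (fun _ => 1)
      (Function.update x i t)) (x i) = auxL ν (fun O a => auxM y O a a)
        (fun O => auxM y O i i ^ 2) x := by
    intro i
    rw [iteratedDeriv_succ, iteratedDeriv_one, d1,
      (auxL_hasDerivAt ν hm (g := fun O => auxM y O i i * 1) (by fun_prop) x i (x i)).deriv]
    simp [sq]
  simp only [d1, d2, Function.update_eq_self, mul_one]
  have h3 : ∀ i, ∀ j ∈ Finset.univ.erase i, (1 / (x i - x j)) *
      (auxL ν (fun O a => auxM y O a a) (fun O => auxM y O i i) x -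
        auxL ν (fun O a => auxM y O a a) (fun O => auxM y O j j) x) =
      2 * auxL ν (fun O a => auxM y O a a) (fun O => auxM y O i j ^ 2) x := by
    intro i j hj
    have hij : i ≠ j := (Finset.ne_of_mem_erase hj).symm
    rw [aux_rel ν y x hij]
    have := sub_ne_zero.2 (hx i j hij)
    field_simp
  rw [Finset.sum_congr rfl fun i _ => Finset.sum_congr rfl (h3 i)]
  simp only [← Finset.mul_sum]
  rw [← mul_assoc, show (1 / 2 * 2 : ℝ) = 1 by norm_num, one_mul, ← Finset.sum_add_distrib]
  have h4 : ∀ i, auxL ν (fun O a => auxM y O a a) (fun O => auxM y O i i ^ 2) x +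
      ∑ j ∈ Finset.univ.erase i, auxL ν (fun O a => auxM y O a a) (fun O => auxM y O i j ^ 2) x =
      ∑ j, auxL ν (fun O a => auxM y O a a) (fun O => auxM y O i j ^ 2) x := fun i =>
    Finset.add_sum_erase Finset.univ
      (fun j => auxL ν (fun O a => auxM y O a a) (fun O => auxM y O i j ^ 2) x) (Finset.mem_univ i)
  simp only [h4]
  unfold auxL
  have hI : ∀ i j, Integrable (fun O => Real.exp (∑ a, x a * auxM y O a a) * auxM y O i j ^ 2) ν := by
    intro i j
    apply aux_integrable
    fun_prop
  rw [Finset.sum_congr rfl fun i _ => (integral_finsetSum _ fun j _ => hI i j).symm,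
    ← integral_finsetSum _ fun i _ => integrable_finsetSum _ fun j _ => hI i j,
    ← integral_const_mul]
  congr 1
  ext O
  simp only [← Finset.mul_sum, auxM_sq]
  ring
end
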